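/- Let L be a real symmetric N×N positive semidefinite matrix, σ > 0, Θ = L + (1/σ²) I, X ∈ ℝ^{N×M}, and e ∈ ℝ^N. Define F(w) = log det(Θ + w · e eᵀ) − (1/M) Tr(Xᵀ (Θ + w · e eᵀ) X). Then F′(0) = 0 if and only if eᵀ Θ⁻¹ e = (1/M) ‖Xᵀ e‖₂², i.e., the stationarity condition holds exactly when the spectral embedding distance z^{emb} = eᵀ Θ⁻¹ e matches the data distance z^{data} = ‖Xᵀ e‖₂²/M along direction e. -/

import Mathlib

open Matrix

/-- With `Θ = L + (1/σ²) I` for `L` symmetric PSD and `σ > 0`, and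
`F(w) = log det(Θ + w e eᵀ) - (1/M) Tr(Xᵀ (Θ + w e eᵀ) X)`, the stationarity
condition `F'(0) = 0` holds if and only if the spectral embedding distance
`eᵀ Θ⁻¹ e` matches the data distance `‖Xᵀ e‖₂²/M`. -/
theorem graph_learning_stationarity_iff
    {N M : ℕ} (L : Matrix (Fin N) (Fin N) ℝ) (hsymm : L.IsSymm) (hpsd : L.PosSemidef)
    (σ : ℝ) (hσ : 0 < σ)
    (Θ : Matrix (Fin N) (Fin N) ℝ) (hΘ : Θ = L + (1 / σ ^ 2) • 1)
    (X : Matrix (Fin N) (Fin M) ℝ) (e : Fin N → ℝ)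
    (F : ℝ → ℝ)
    (hF : F = fun w : ℝ =>
      Real.log (Θ + w • Matrix.vecMulVec e e).det
        - (1 / (M : ℝ)) * Matrix.trace (Xᵀ * (Θ + w • Matrix.vecMulVec e e) * X)) :
    deriv F 0 = 0 ↔
      e ⬝ᵥ (Θ⁻¹ *ᵥ e) = (1 / (M : ℝ)) * ((Xᵀ *ᵥ e) ⬝ᵥ (Xᵀ *ᵥ e)) := by
  have hpos : Θ.PosDef := by
    rw [hΘ]
    exact Matrix.PosDef.posSemidef_add hpsd (Matrix.PosDef.one.smul (by positivity))
  have hdet : 0 < Θ.det := hpos.det_pos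
  have hunit : IsUnit Θ.det := hdet.ne'.isUnit
  set a : ℝ := e ⬝ᵥ (Θ⁻¹ *ᵥ e) with ha
  set b : ℝ := (Xᵀ *ᵥ e) ⬝ᵥ (Xᵀ *ᵥ e) with hb
  have h1 : ∀ w : ℝ, (Θ + w • Matrix.vecMulVec e e).det = Θ.det * (1 + w * a) := by
    intro w
    have h := Matrix.det_add_replicateCol_mul_replicateRow (ι := Unit) hunit (w • e) e
    rw [← Matrix.vecMulVec_eq, Matrix.smul_vecMulVec] at h
    rw [h]
    congr 1
    rw [Matrix.det_unique, Matrix.add_apply, Matrix.one_apply_eq, Matrix.mul_assoc, ← Matrix.replicateCol_mulVec,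
      Matrix.replicateRow_mul_replicateCol_apply, Matrix.mulVec_smul, dotProduct_smul, smul_eq_mul]
  have h2 : ∀ w : ℝ, Matrix.trace (Xᵀ * (Θ + w • Matrix.vecMulVec e e) * X)
      = Matrix.trace (Xᵀ * Θ * X) + w * b := by
    intro w
    rw [Matrix.mul_add, Matrix.add_mul, Matrix.trace_add, Matrix.mul_smul, Matrix.smul_mul,
      Matrix.trace_smul, Matrix.mul_vecMulVec, Matrix.vecMulVec_mul, Matrix.trace_vecMulVec,
      ← Matrix.mulVec_transpose, smul_eq_mul]
  have hd : HasDerivAt F (a - (1 / (M : ℝ)) * b) 0 := by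
    rw [hF]
    simp only [h1, h2]
    have e1 : HasDerivAt (fun w : ℝ => Θ.det * (1 + w * a)) (Θ.det * (1 * a)) 0 :=
      (((hasDerivAt_id (0 : ℝ)).mul_const a).const_add 1).const_mul _
    have e2 := e1.log (by simpa using hdet.ne')
    have e3 : HasDerivAt (fun w : ℝ => (1 / (M : ℝ)) * (Matrix.trace (Xᵀ * Θ * X) + w * b))
        ((1 / (M : ℝ)) * (1 * b)) 0 :=
      (((hasDerivAt_id (0 : ℝ)).mul_const b).const_add _).const_mul _
    refine (e2.sub e3).congr_deriv ?_
    simp only [zero_mul, add_zero, mul_one, one_mul]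
    rw [mul_div_cancel_left₀ _ hdet.ne']
  rw [hd.deriv, sub_eq_zero]
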